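/- arXiv:2003.12029 — 2 statements merged into one kernel-verified Lean document; each statement's English description precedes it below -/
import Mathlib

section
/- Let G be a graph. If the constant distance closure CDC(G) of G is a complete graph, then G is not movable. -/
open SimpleGraph Real

/-- The Euclidean plane. -/
abbrev Plane : Type := EuclideanSpace ℝ (Fin 2)

variable {V : Type*}

/-- A placement of a graph in the plane: endpoints of edges do not coincide. -/
def IsPlacement (G : SimpleGraph V) (p : V → Plane) : Prop :=
  ∀ ⦃u v : V⦄, G.Adj u v → p u ≠ p v

/-- Two placements are equivalent as frameworks on `G` if corresponding
edge lengths agree. -/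
def FrameworkEquiv (G : SimpleGraph V) (p q : V → Plane) : Prop :=
  ∀ ⦃u v : V⦄, G.Adj u v → dist (p u) (p v) = dist (q u) (q v)

/-- Two placements are congruent if all pairwise distances agree. -/
def PCongruent (p q : V → Plane) : Prop :=
  ∀ u v : V, dist (p u) (p v) = dist (q u) (q v)

/-- A flex of the framework `(G, p)`: a continuous path of placements on `[0,1]`
starting at `p`, each equivalent to `(G, p)`. -/
def IsFlex (G : SimpleGraph V) (p : V → Plane) (f : ℝ → V → Plane) : Prop :=
  ContinuousOn f (Set.Icc 0 1) ∧ f 0 = p ∧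
    ∀ t ∈ Set.Icc (0 : ℝ) 1, IsPlacement G (f t) ∧ FrameworkEquiv G p (f t)

/-- A flex is trivial if every placement along it is congruent to the initial one. -/
def IsTrivialFlex (p : V → Plane) (f : ℝ → V → Plane) : Prop :=
  ∀ t ∈ Set.Icc (0 : ℝ) 1, PCongruent (f t) p

/-- The placement `p` induces the labeling `lam`. -/
def Induces (G : SimpleGraph V) (p : V → Plane) (lam : Sym2 V → ℝ) : Prop :=
  ∀ ⦃u v : V⦄, G.Adj u v → dist (p u) (p v) = lam s(u, v)

/-- A labeling (positive on the edges) is flexible if some framework inducing it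
has a non-trivial flex. -/
def IsFlexibleLabeling (G : SimpleGraph V) (lam : Sym2 V → ℝ) : Prop :=
  (∀ e ∈ G.edgeSet, 0 < lam e) ∧
    ∃ p : V → Plane, Induces G p lam ∧ ∃ f, IsFlex G p f ∧ ¬ IsTrivialFlex p f

/-- A labeling is a proper flexible labeling if some framework inducing it has a
non-trivial flex in which all but finitely many placements are injective. -/
def IsProperFlexibleLabeling (G : SimpleGraph V) (lam : Sym2 V → ℝ) : Prop :=
  (∀ e ∈ G.edgeSet, 0 < lam e) ∧
    ∃ p : V → Plane, Induces G p lam ∧ ∃ f, IsFlex G p f ∧ ¬ IsTrivialFlex p f ∧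
      {t ∈ Set.Icc (0 : ℝ) 1 | ¬ Function.Injective (f t)}.Finite

/-- A graph is movable if it has a proper flexible labeling. -/
def Movable (G : SimpleGraph V) : Prop :=
  ∃ lam : Sym2 V → ℝ, IsProperFlexibleLabeling G lam

/-- A NAC-coloring: a surjective 2-coloring (`true` = red, `false` = blue) of the
edges such that every cycle is either monochromatic or contains at least two
edges of each color. -/
def IsNACColoring (G : SimpleGraph V) (δ : Sym2 V → Bool) : Prop :=
  (∃ e ∈ G.edgeSet, δ e = true) ∧ (∃ e ∈ G.edgeSet, δ e = false) ∧
    ∀ ⦃v : V⦄ (c : G.Walk v v), c.IsCycle →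
      (∀ e ∈ c.edges, δ e = true) ∨ (∀ e ∈ c.edges, δ e = false) ∨
        (2 ≤ (c.edges.filter (fun e => δ e)).length ∧
          2 ≤ (c.edges.filter (fun e => !(δ e))).length)

/-- The pairs `{u, v}` of non-adjacent vertices joined by a path that is
monochromatic for every NAC-coloring of `G`. -/
def UPairs (G : SimpleGraph V) : Set (Sym2 V) :=
  {p | ∃ u v : V, p = s(u, v) ∧ u ≠ v ∧ ¬ G.Adj u v ∧
    ∃ w : G.Walk u v, w.IsPath ∧
      ∀ δ : Sym2 V → Bool, IsNACColoring G δ →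
        (∀ e ∈ w.edges, δ e = true) ∨ (∀ e ∈ w.edges, δ e = false)}

/-- `H` is the constant distance closure of `G`. -/
def IsCDC (G H : SimpleGraph V) : Prop :=
  ∃ (n : ℕ) (Gs : ℕ → SimpleGraph V), Gs 0 = G ∧
    (∀ i < n, Gs (i + 1) =
      SimpleGraph.fromEdgeSet ((Gs i).edgeSet ∪ UPairs (Gs i))) ∧
    UPairs (Gs n) = ∅ ∧ H = Gs n

/-- If a list sums to zero and some entry lies outside an additive subgroup, then at least two
entries do. -/
theorem List.two_le_length_filter_of_sum_eq_zero {ι M : Type*} [AddCommGroup M]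
    (S : AddSubgroup M) (h : ι → M) (q : ι → Bool) (hq : ∀ i, q i = false → h i ∈ S)
    (hq' : ∀ i, q i = true → h i ∉ S) (L : List ι) (hL : (L.map h).sum = 0)
    (hne : ∃ i ∈ L, q i = true) : 2 ≤ (L.filter q).length := by
  have key : (L.map h).sum - ((L.filter q).map h).sum ∈ S := by
    clear hL hne
    induction L with
    | nil => simp
    | cons a L ih =>
      rcases hb : q a with _ | _
      · have := S.add_mem (hq a hb) ih
        simpa [hb, add_sub_assoc] using this
      · simpa [hb] using ih
  obtain ⟨i, hi, hqi⟩ := hne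
  have hmem : i ∈ L.filter q := List.mem_filter.2 ⟨hi, hqi⟩
  by_contra hlt
  have hlen : (L.filter q).length = 1 := by
    have := List.length_pos_of_mem hmem
    omega
  obtain ⟨j, hj⟩ := List.length_eq_one_iff.1 hlen
  rw [hj] at hmem key
  obtain rfl : i = j := by simpa using hmem
  refine hq' i hqi ?_
  simpa [hL] using key

theorem SimpleGraph.Walk.sum_darts_sub {M : Type*} [AddCommGroup M] {G : SimpleGraph V}
    (P : V → M) {u v : V} (w : G.Walk u v) :
    (w.darts.map fun d => P d.fst - P d.snd).sum = P u - P v := by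
  induction w with
  | nil => simp
  | cons h w ih => simp [ih]

/-- Thresholding a valuation on edge differences gives a NAC-coloring, provided the differences of
a second map are, up to units, inverse to those of the first. -/
theorem exists_isNACColoring_of_valuation {K Γ : Type*} [Field K]
    [LinearOrderedCommGroupWithZero Γ] (val : Valuation K Γ) {G : SimpleGraph V} (P Q : V → K)
    (hPQ : ∀ ⦃u v : V⦄, G.Adj u v → val (P u - P v) * val (Q u - Q v) = 1)
    {a b c d : V} (hab : G.Adj a b) (hcd : G.Adj c d) (hlt : val (P c - P d) < val (P a - P b)) :
    ∃ δ : Sym2 V → Bool, IsNACColoring G δ ∧ δ s(c, d) = true ∧ δ s(a, b) = false := by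
  classical
  set α := val (P a - P b) with hα
  set ν : Sym2 V → Γ := Sym2.lift ⟨fun u v => val (P u - P v), fun u v => val.map_sub_swap _ _⟩
  have hα0 : α ≠ 0 := left_ne_zero_of_mul_eq_one (hPQ hab)
  let δ : Sym2 V → Bool := fun e => decide (ν e < α)
  have hδ : ∀ u v, δ s(u, v) = decide (val (P u - P v) < α) := fun u v => rfl
  refine ⟨δ, ⟨⟨s(c, d), hcd, by simpa [hδ] using hlt⟩, ⟨s(a, b), hab, by simp [hδ, hα]⟩, ?_⟩,
    by simpa [hδ] using hlt, by simp [hδ, hα]⟩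
  intro x w _
  by_cases htrue : ∀ e ∈ w.edges, δ e = true
  · exact Or.inl htrue
  by_cases hfalse : ∀ e ∈ w.edges, δ e = false
  · exact Or.inr (Or.inl hfalse)
  push Not at htrue hfalse
  refine Or.inr (Or.inr ⟨?_, ?_⟩)
  · let S : AddSubgroup K :=
      { carrier := {y | val y ≤ α⁻¹}
        zero_mem' := by simp
        add_mem' := fun {y z} hy hz => val.map_add_le hy hz
        neg_mem' := fun {y} hy => by simpa [Valuation.map_neg] using hy }
    have hS : ∀ e : G.Dart, Q e.fst - Q e.snd ∈ S ↔ δ e.edge = false := by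
      intro e
      have h1 := hPQ e.adj
      have h2 : val (Q e.fst - Q e.snd) = (val (P e.fst - P e.snd))⁻¹ :=
        eq_inv_of_mul_eq_one_right h1
      have h0 := left_ne_zero_of_mul_eq_one h1
      change val (Q e.fst - Q e.snd) ≤ α⁻¹ ↔ decide (val (P e.fst - P e.snd) < α) = false
      rw [h2, inv_le_inv₀ (zero_lt_iff.2 h0) (zero_lt_iff.2 hα0)]
      simp
    have := List.two_le_length_filter_of_sum_eq_zero S
      (fun e : G.Dart => Q e.fst - Q e.snd) (fun e => δ e.edge)
      (fun e he => (hS e).2 he) (fun e he => by simp [hS, he]) w.darts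
      (by simp [SimpleGraph.Walk.sum_darts_sub])
      (by
        obtain ⟨e, he, hde⟩ := hfalse
        obtain ⟨e', he', rfl⟩ := List.mem_map.1 he
        exact ⟨e', he', by simpa using hde⟩)
    simpa [SimpleGraph.Walk.edges, List.filter_map, Function.comp_def] using this
  · have hS : ∀ e : G.Dart, P e.fst - P e.snd ∈ val.ltAddSubgroup (Units.mk0 α hα0) ↔
        δ e.edge = true := by
      intro e
      change val (P e.fst - P e.snd) < α ↔ decide (val (P e.fst - P e.snd) < α) = true
      simp
    have := List.two_le_length_filter_of_sum_eq_zero (val.ltAddSubgroup (Units.mk0 α hα0))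
      (fun e : G.Dart => P e.fst - P e.snd) (fun e => !δ e.edge)
      (fun e he => (hS e).2 (by simpa using he))
      (fun e he => by rw [hS]; simpa using he) w.darts
      (by simp [SimpleGraph.Walk.sum_darts_sub])
      (by
        obtain ⟨e, he, hde⟩ := htrue
        obtain ⟨e', he', rfl⟩ := List.mem_map.1 he
        exact ⟨e', he', by simpa using hde⟩)
    simpa [SimpleGraph.Walk.edges, List.filter_map, Function.comp_def] using this

/-- An element outside an algebraically closed subfield is excluded by some valuation ring
containing that subfield. -/
theorem IsAlgClosed.exists_valuationSubring_notMem {k K : Type*} [Field k] [IsAlgClosed k]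
    [Field K] (i : k →+* K) {x : K} (hx : x ∉ i.range) :
    ∃ A : ValuationSubring K, i.range ≤ A.toSubring ∧ x ∉ A := by
  algebraize [i]
  have : IsIntegrallyClosedIn i.range K := by
    rw [Subring.isIntegrallyClosedIn_iff]
    rintro y ⟨p, hp, hpy⟩
    have hint : IsIntegral k y := by
      obtain ⟨q, hq, hqm⟩ := (Polynomial.lifts_and_natDegree_eq_and_monic
        (f := i.rangeRestrict) (p := p)
        ((Polynomial.mem_lifts p).2 (Polynomial.map_surjective _ i.rangeRestrict_surjective p)) hp)
      refine ⟨q, hqm.2, ?_⟩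
      rw [← hq, Polynomial.eval₂_map] at hpy
      exact hpy
    have h1 := IsAlgClosed.degree_eq_one_of_irreducible k (minpoly.irreducible hint)
    exact minpoly.mem_range_of_degree_eq_one k y h1
  exact Subring.exists_le_valuationSubring_of_isIntegrallyClosedIn hx

theorem exists_isNACColoring_of_infinite_range {T : Type*} {G : SimpleGraph V} (P : T → V → ℂ)
    (hP : ∀ ⦃u v : V⦄, G.Adj u v → ∃ r : ℝ, r ≠ 0 ∧ ∀ t, ‖P t u - P t v‖ = r)
    {a b c d : V} (hab : G.Adj a b) (hcd : G.Adj c d)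
    (hinf : (Set.range fun t => (P t a - P t b) / (P t c - P t d)).Infinite) :
    ∃ δ : Sym2 V → Bool, IsNACColoring G δ ∧ δ s(c, d) = true ∧ δ s(a, b) = false := by
  set g : T → ℂ := fun t => (P t a - P t b) / (P t c - P t d) with hg
  have hne : (Filter.comap g Filter.cofinite).NeBot := by
    rw [Filter.comap_neBot_iff_frequently, Filter.frequently_cofinite_iff_infinite]
    exact hinf
  let 𝒰 : Ultrafilter T := Ultrafilter.of (Filter.comap g Filter.cofinite)
  have h𝒰 : (𝒰 : Filter T) ≤ Filter.comap g Filter.cofinite := Ultrafilter.of_le _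
  let K := Filter.Germ (𝒰 : Filter T) ℂ
  let toK : (T → ℂ) →+* K := Filter.Germ.coeRingHom (𝒰 : Filter T)
  let i : ℂ →+* K := toK.comp (Pi.constRingHom T ℂ)
  have hx : toK g ∉ i.range := by
    rintro ⟨z, hz⟩
    have h1 : (fun _ : T => z) =ᶠ[(𝒰 : Filter T)] g := Filter.Germ.coe_eq.1 hz
    have h2 : ∀ᶠ t in (𝒰 : Filter T), g t ≠ z :=
      h𝒰 (Filter.preimage_mem_comap (Set.finite_singleton z).compl_mem_cofinite)
    obtain ⟨t, ht1, ht2⟩ := (h1.and h2).exists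
    exact ht2 ht1.symm
  obtain ⟨A, hA, hxA⟩ := IsAlgClosed.exists_valuationSubring_notMem i hx
  let p : V → K := fun u => toK fun t => P t u
  let q : V → K := fun u => toK fun t => starRingEnd ℂ (P t u)
  have hpq : ∀ ⦃u v : V⦄, G.Adj u v →
      A.valuation (p u - p v) * A.valuation (q u - q v) = 1 := by
    intro u v huv
    obtain ⟨r, hr, hrt⟩ := hP huv
    have hz : ((r : ℂ) ^ 2) ≠ 0 := by simpa using hr
    have h1 : (p u - p v) * (q u - q v) = i ((r : ℂ) ^ 2) := by
      simp only [p, q, i, ← map_sub, ← map_mul, RingHom.comp_apply]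
      congr 1
      funext t
      have := Complex.mul_conj' (P t u - P t v)
      rw [hrt] at this
      simpa using this
    have hle : ∀ z : ℂ, A.valuation (i z) ≤ 1 := fun z =>
      (A.valuation_le_one_iff _).2 (hA ⟨z, rfl⟩)
    rw [← map_mul, h1]
    refine le_antisymm (hle _) ?_
    have h3 := hle ((r : ℂ) ^ 2)⁻¹
    rw [map_inv₀, map_inv₀] at h3
    have h0 : A.valuation (i ((r : ℂ) ^ 2)) ≠ 0 := by
      rw [Valuation.ne_zero_iff]
      exact (map_ne_zero i).2 hz
    exact (inv_le_one₀ (zero_lt_iff.2 h0)).1 h3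
  refine exists_isNACColoring_of_valuation A.valuation p q hpq hab hcd ?_
  have hc0 := left_ne_zero_of_mul_eq_one (hpq hcd)
  have hgx : toK g * (p c - p d) = p a - p b := by
    simp only [p, ← map_sub, ← map_mul]
    congr 1
    funext t
    obtain ⟨r, hr, hrt⟩ := hP hcd
    have : P t c - P t d ≠ 0 := norm_ne_zero_iff.1 (by rw [hrt]; exact hr)
    simp only [hg, Pi.mul_apply, Pi.sub_apply]
    exact div_mul_cancel₀ _ this
  rw [← hgx, map_mul]
  have h1 : 1 < A.valuation (toK g) := not_le.1 fun h => hxA ((A.valuation_le_one_iff _).1 h)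
  exact lt_mul_of_one_lt_left (zero_lt_iff.2 hc0) h1

/-- Along a flex, the distance between the ends of a walk which is monochromatic in every
NAC-coloring is constant. -/
theorem IsFlex.dist_eq_of_walk {G : SimpleGraph V} {p : V → Plane} {f : ℝ → V → Plane}
    (hf : IsFlex G p f) {u v : V} (w : G.Walk u v)
    (hw : ∀ δ : Sym2 V → Bool, IsNACColoring G δ →
      (∀ e ∈ w.edges, δ e = true) ∨ (∀ e ∈ w.edges, δ e = false))
    {t : ℝ} (ht : t ∈ Set.Icc (0 : ℝ) 1) : dist (p u) (p v) = dist (f t u) (f t v) := by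
  obtain ⟨hcont, rfl, hflex⟩ := hf
  let φ := Complex.orthonormalBasisOneI.repr.symm
  let P : Set.Icc (0 : ℝ) 1 → V → ℂ := fun s x => φ (f s x)
  have hdist : ∀ s x y, ‖P s x - P s y‖ = dist (f s x) (f s y) := fun s x y => by
    rw [← dist_eq_norm]; exact φ.dist_map _ _
  have hPcont : ∀ x, Continuous fun s => P s x := fun x =>
    φ.continuous.comp ((continuous_apply x).comp (continuousOn_iff_continuous_domRestrict.1 hcont))
  have hP : ∀ ⦃x y : V⦄, G.Adj x y → ∃ r : ℝ, r ≠ 0 ∧ ∀ s, ‖P s x - P s y‖ = r := by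
    intro x y hxy
    refine ⟨dist (f 0 x) (f 0 y), ?_, fun s => ?_⟩
    · exact dist_ne_zero.2 ((hflex 0 (by simp)).1 hxy)
    · rw [hdist]; exact ((hflex s s.2).2 hxy).symm
  have hne : ∀ (e : G.Dart) s, P s e.fst - P s e.snd ≠ 0 := fun e s => by
    obtain ⟨r, hr, hrs⟩ := hP e.adj
    exact norm_ne_zero_iff.1 (by rw [hrs]; exact hr)
  have hratio : ∀ e ∈ w.darts, ∀ e' ∈ w.darts, ∀ s s',
      (P s e.fst - P s e.snd) / (P s e'.fst - P s e'.snd) =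
        (P s' e.fst - P s' e.snd) / (P s' e'.fst - P s' e'.snd) := by
    intro e he e' he' s s'
    by_contra hss
    have hg : Continuous fun s => (P s e.fst - P s e.snd) / (P s e'.fst - P s e'.snd) :=
      ((hPcont _).sub (hPcont _)).div ((hPcont _).sub (hPcont _)) (hne e')
    obtain ⟨δ, hδ, h1, h2⟩ := exists_isNACColoring_of_infinite_range P hP e.adj e'.adj
      ((isPreconnected_range hg).infinite_of_nontrivial ⟨_, ⟨s, rfl⟩, _, ⟨s', rfl⟩, hss⟩)
    have hm : s(e.fst, e.snd) ∈ w.edges := List.mem_map.2 ⟨e, he, rfl⟩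
    have hm' : s(e'.fst, e'.snd) ∈ w.edges := List.mem_map.2 ⟨e', he', rfl⟩
    rcases hw δ hδ with h | h
    · simp [h _ hm] at h2
    · simp [h _ hm'] at h1
  let s₀ : Set.Icc (0 : ℝ) 1 := ⟨0, by simp⟩
  let s₁ : Set.Icc (0 : ℝ) 1 := ⟨t, ht⟩
  change dist (f s₀ u) (f s₀ v) = dist (f s₁ u) (f s₁ v)
  rw [← hdist, ← hdist]
  rcases hd : w.darts with _ | ⟨e', l⟩
  · have h := fun s => w.sum_darts_sub (P s)
    simp only [hd, List.map_nil, List.sum_nil] at h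
    rw [← h, ← h]
  · have he' : e' ∈ w.darts := by simp [hd]
    have h : ∀ s, P s u - P s v = (w.darts.map fun e =>
        (P s₀ e.fst - P s₀ e.snd) / (P s₀ e'.fst - P s₀ e'.snd)).sum *
          (P s e'.fst - P s e'.snd) := by
      intro s
      rw [← w.sum_darts_sub (P s), ← List.sum_map_mul_right]
      congr 1
      refine List.map_congr_left fun e he => ?_
      rw [hratio e he e' he' s₀ s, div_mul_cancel₀ _ (hne e' s)]
    obtain ⟨r, -, hr⟩ := hP e'.adj
    rw [h s₀, h s₁, norm_mul, norm_mul, hr, hr]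

/-- A flex that is injective at some time remains a flex after adding the edges of `UPairs G`. -/
theorem IsFlex.fromEdgeSet_union_UPairs {G : SimpleGraph V} {p : V → Plane} {f : ℝ → V → Plane}
    (hf : IsFlex G p f) {t₀ : ℝ} (ht₀ : t₀ ∈ Set.Icc (0 : ℝ) 1)
    (hinj : Function.Injective (f t₀)) :
    IsFlex (SimpleGraph.fromEdgeSet (G.edgeSet ∪ UPairs G)) p f := by
  have hequiv : ∀ t ∈ Set.Icc (0 : ℝ) 1,
      FrameworkEquiv (SimpleGraph.fromEdgeSet (G.edgeSet ∪ UPairs G)) p (f t) := by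
    intro t ht u v huv
    rw [SimpleGraph.fromEdgeSet_adj] at huv
    rcases huv.1 with h | ⟨a, b, hab, -, -, w, -, hw⟩
    · exact (hf.2.2 t ht).2 h
    · have := hf.dist_eq_of_walk w hw ht
      rcases Sym2.eq_iff.1 hab with ⟨rfl, rfl⟩ | ⟨rfl, rfl⟩
      · exact this
      · rwa [dist_comm (p u), dist_comm (f t u)]
  refine ⟨hf.1, hf.2.1, fun t ht => ⟨fun u v huv => ?_, hequiv t ht⟩⟩
  rw [← dist_ne_zero, ← hequiv t ht huv, hequiv t₀ ht₀ huv, dist_ne_zero]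
  exact hinj.ne huv.ne

/-- If the constant distance closure of `G` is the complete graph, then `G` is
not movable. -/
theorem not_movable_of_cdc_complete [Fintype V] (G H : SimpleGraph V)
    (hcdc : IsCDC G H) (hcomplete : H = ⊤) : ¬ Movable G := by
  rintro ⟨lam, -, p, -, f, hf, hnontriv, hfin⟩
  obtain ⟨n, Gs, h0, hstep, -, hn⟩ := hcdc
  obtain ⟨t₀, ht₀, hinj⟩ :=
    (Set.Icc_infinite (zero_lt_one (α := ℝ))).exists_notMem_finite hfin
  replace hinj : Function.Injective (f t₀) := by
    by_contra h
    exact hinj ⟨ht₀, h⟩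
  have hflex : ∀ i ≤ n, IsFlex (Gs i) p f := by
    intro i
    induction i with
    | zero => intro _; rwa [h0]
    | succ i ih =>
      intro hi
      rw [hstep i hi]
      exact (ih (Nat.le_of_succ_le hi)).fromEdgeSet_union_UPairs ht₀ hinj
  have htop := hflex n le_rfl
  rw [← hn, hcomplete] at htop
  refine hnontriv fun t ht u v => ?_
  rcases eq_or_ne u v with rfl | huv
  · simp
  · exact ((htop.2.2 t ht).2 (SimpleGraph.top_adj u v |>.2 huv)).symm
end

section
/- Let G be a connected graph with at least one edge. If G is movable, then G has a NAC-coloring. -/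
open SimpleGraph Real

variable {V : Type*}

/-- A subring that is the image of an algebraically closed field contains every element which is
integral over it. -/
lemma mem_range_of_isIntegral_range {k K : Type*} [Field k] [IsAlgClosed k] [Field K]
    (φ : k →+* K) {x : K} (hx : IsIntegral φ.range x) : x ∈ φ.range := by
  let := φ.toAlgebra
  obtain ⟨q, hq, hqx⟩ := hx
  obtain ⟨p, hp, -, hpm⟩ := Polynomial.lifts_and_natDegree_eq_and_monic
    (Polynomial.map_surjective φ.rangeRestrict φ.rangeRestrict_surjective q) hq
  have hint : IsIntegral k x := by
    refine ⟨p, hpm, ?_⟩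
    rw [← hp, Polynomial.eval₂_map] at hqx
    exact hqx
  exact minpoly.mem_range_of_degree_eq_one k x
    (IsAlgClosed.degree_eq_one_of_irreducible k (minpoly.irreducible hint))

/-- An element of a field extension outside the algebraically closed base field has positive
valuation for some valuation trivial on the base field. -/
lemma exists_valuationSubring_valuation_lt_one {k K : Type*} [Field k] [IsAlgClosed k] [Field K]
    (φ : k →+* K) {x : K} (hx : x ∉ φ.range) :
    ∃ A : ValuationSubring K, (∀ c, φ c ∈ A) ∧ A.valuation x < 1 := by
  have hclosed : IsIntegrallyClosedIn φ.range K :=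
    isIntegrallyClosedIn_iff.mpr
      ⟨Subtype.val_injective, fun hy => ⟨⟨_, mem_range_of_isIntegral_range φ hy⟩, rfl⟩⟩
  have hx' : x⁻¹ ∉ φ.range := by
    rintro ⟨c, hc⟩
    exact hx ⟨c⁻¹, by rw [map_inv₀, hc, inv_inv]⟩
  have hx0 : x ≠ 0 := by
    rintro rfl
    exact hx (zero_mem _)
  obtain ⟨A, hA, hxA⟩ := Subring.exists_le_valuationSubring_of_isIntegrallyClosedIn hx'
  refine ⟨A, fun c => hA ⟨c, rfl⟩, ?_⟩
  rwa [← A.valuation_le_one_iff, not_le, map_inv₀,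
    one_lt_inv₀ ((Valuation.pos_iff _).mpr hx0)] at hxA

/-- If exactly the edges selected by `P` have their difference outside the additive subgroup `S`,
then the difference along a walk with no selected edge lies in `S`, and the difference along a walk
with one selected edge does not. -/
lemma SimpleGraph.Walk.sub_mem_of_length_filter_edges {V K : Type*} [AddCommGroup K] {G : SimpleGraph V}
    (S : AddSubgroup K) (f : V → K) (P : Sym2 V → Bool)
    (hP : ∀ ⦃u v⦄, G.Adj u v → (P s(u, v) = true ↔ f u - f v ∉ S))
    {u v : V} (p : G.Walk u v) :
    ((p.edges.filter P).length = 0 → f u - f v ∈ S) ∧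
      ((p.edges.filter P).length = 1 → f u - f v ∉ S) := by
  induction p with
  | nil => simp
  | @cons u v w h p ih =>
    have hsplit : f u - f w = (f u - f v) + (f v - f w) := by abel
    have huv := hP h
    rw [SimpleGraph.Walk.edges_cons, hsplit]
    by_cases hc : P s(u, v) = true
    · rw [List.filter_cons_of_pos hc]
      refine ⟨by simp, fun h1 => ?_⟩
      rw [S.add_mem_cancel_right (ih.1 (by simpa using h1))]
      exact huv.1 hc
    · have hmem : f u - f v ∈ S := not_not.1 fun hn => hc (huv.2 hn)
      rw [List.filter_cons_of_neg hc, S.add_mem_cancel_left hmem]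
      exact ih

lemma SimpleGraph.Walk.length_filter_edges_ne_one {V K : Type*} [AddCommGroup K]
    {G : SimpleGraph V} (S : AddSubgroup K) (f : V → K) (P : Sym2 V → Bool)
    (hP : ∀ ⦃u v⦄, G.Adj u v → (P s(u, v) = true ↔ f u - f v ∉ S))
    {u : V} (p : G.Walk u u) : (p.edges.filter P).length ≠ 1 := fun h =>
  (p.sub_mem_of_length_filter_edges S f P hP).2 h (by simp)

/-- A valuation with respect to which the edges have squared lengths of valuation zero, at least one edge has
positive valuation and at least one has valuation zero gives rise to a NAC-coloring. -/
lemma exists_isNACColoring_of_valuationSubring {V K : Type*} [Field K] (G : SimpleGraph V)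
    (A : ValuationSubring K) (w z : V → K)
    (hedge : ∀ ⦃u v⦄, G.Adj u v → A.valuation ((w u - w v) * (z u - z v)) = 1)
    (hred : ∃ u v, G.Adj u v ∧ A.valuation (w u - w v) < 1)
    (hblue : ∃ u v, G.Adj u v ∧ A.valuation (w u - w v) = 1) :
    ∃ δ : Sym2 V → Bool, IsNACColoring G δ := by
  classical
  have hsymm : Std.Symm fun u v => A.valuation (w u - w v) < 1 :=
    ⟨fun u v h => (A.valuation.map_sub_swap (w v) (w u)).trans_lt h⟩
  let δ : Sym2 V → Bool := fun e => decide (e ∈ Sym2.fromRel hsymm)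
  have hδ : ∀ u v, δ s(u, v) = true ↔ A.valuation (w u - w v) < 1 := fun u v => by simp [δ]
  have hδz : ∀ ⦃u v⦄, G.Adj u v →
      (δ s(u, v) = true ↔ z u - z v ∉ A.toSubring.toAddSubgroup) := fun u v h => by
    have hmul := hedge h
    rw [map_mul] at hmul
    rw [hδ]
    have hmem : z u - z v ∈ A.toSubring.toAddSubgroup ↔ A.valuation (z u - z v) ≤ 1 :=
      (A.valuation_le_one_iff _).symm
    have hw0 : 0 < A.valuation (w u - w v) := by
      rw [pos_iff_ne_zero]
      intro h0
      simp [h0] at hmul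
    rw [hmem, not_le, eq_inv_of_mul_eq_one_right hmul, one_lt_inv₀ hw0]
  have hδw : ∀ ⦃u v⦄, G.Adj u v →
      ((!δ s(u, v)) = true ↔ w u - w v ∉ A.valuation.ltAddSubgroup 1) := fun u v _ => by
    rw [Valuation.mem_ltAddSubgroup_iff, Units.val_one, ← hδ]
    simp
  refine ⟨δ, ?_, ?_, fun v c _ => ?_⟩
  · obtain ⟨u, v, h, hlt⟩ := hred
    exact ⟨s(u, v), h, (hδ u v).2 hlt⟩
  · obtain ⟨u, v, h, heq⟩ := hblue
    exact ⟨s(u, v), h, by rw [← Bool.not_eq_true, hδ, heq]; exact lt_irrefl _⟩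
  · have hr := c.length_filter_edges_ne_one _ z δ hδz
    have hb := c.length_filter_edges_ne_one _ w (fun e => !δ e) hδw
    by_cases hr0 : (c.edges.filter δ).length = 0
    · refine Or.inr (Or.inl fun e he => ?_)
      rw [List.length_eq_zero_iff, List.filter_eq_nil_iff] at hr0
      simpa using hr0 e he
    by_cases hb0 : (c.edges.filter fun e => !δ e).length = 0
    · refine Or.inl fun e he => ?_
      rw [List.length_eq_zero_iff, List.filter_eq_nil_iff] at hb0
      simpa using hb0 e he
    exact Or.inr (Or.inr ⟨by change 2 ≤ (c.edges.filter δ).length; omega, by omega⟩)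

/-- A function with infinite range avoids every constant along some ultrafilter. -/
lemma exists_ultrafilter_forall_eventually_ne {I X : Type*} (h : I → X)
    (hinf : (Set.range h).Infinite) :
    ∃ U : Ultrafilter I, ∀ c, ∀ᶠ t in (U : Filter I), h t ≠ c := by
  have hne : (Filter.comap h Filter.cofinite).NeBot := by
    rw [Filter.comap_neBot_iff_frequently, Filter.frequently_cofinite_iff_infinite]
    exact hinf
  refine ⟨Ultrafilter.of (Filter.comap h Filter.cofinite), fun c => Ultrafilter.of_le _ ?_⟩
  exact Filter.preimage_mem_comap (Set.finite_singleton c).compl_mem_cofinite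

/-- A family of complex placements with constant edge lengths, in which one edge is fixed and
another one takes infinitely many directions, gives rise to a NAC-coloring. -/
lemma exists_isNACColoring_of_infinite_range_s15 {V I : Type*} (G : SimpleGraph V) (g : V → I → ℂ)
    (hedge : ∀ ⦃u v⦄, G.Adj u v → ∃ c : ℝ, c ≠ 0 ∧ ∀ t, Complex.normSq (g u t - g v t) = c)
    (hfix : ∃ u v, G.Adj u v ∧ ∀ t, g u t - g v t = 1)
    (hinf : ∃ u v, G.Adj u v ∧ (Set.range (g u - g v)).Infinite) :
    ∃ δ : Sym2 V → Bool, IsNACColoring G δ := by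
  obtain ⟨a, b, hab, hinf⟩ := hinf
  obtain ⟨U, hU⟩ := exists_ultrafilter_forall_eventually_ne _ hinf
  let K := (U : Filter I).Germ ℂ
  let φ : ℂ →+* K := (Filter.Germ.coeRingHom (U : Filter I)).comp (Pi.constRingHom I ℂ)
  let w : V → K := fun v => (g v : K)
  let z : V → K := fun v => ((fun t => (starRingEnd ℂ) (g v t) : I → ℂ) : K)
  have htrans : w a - w b ∉ φ.range := by
    rintro ⟨c, hc⟩
    have hc' : ((fun _ => c : I → ℂ) : K) = ((g a - g b : I → ℂ) : K) := hc
    rw [Filter.Germ.coe_eq] at hc'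
    obtain ⟨t, ht₁, ht₂⟩ := (hc'.and (hU c)).exists
    exact ht₂ ht₁.symm
  obtain ⟨A, hA, hlt⟩ := exists_valuationSubring_valuation_lt_one φ htrans
  have hval : ∀ c : ℂ, c ≠ 0 → A.valuation (φ c) = 1 := fun c hc => by
    refine le_antisymm ((A.valuation_le_one_iff _).2 (hA c)) ?_
    have hinv := (A.valuation_le_one_iff _).2 (hA c⁻¹)
    rwa [map_inv₀, map_inv₀, inv_le_one₀] at hinv
    rwa [Valuation.pos_iff, map_ne_zero]
  refine exists_isNACColoring_of_valuationSubring G A w z (fun u v h => ?_) ⟨a, b, hab, hlt⟩ ?_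
  · obtain ⟨c, hc, heq⟩ := hedge h
    have hcst : (w u - w v) * (z u - z v) = φ c := by
      refine Filter.Germ.coe_eq.2 (Filter.Eventually.of_forall fun t => ?_)
      have := Complex.mul_conj (g u t - g v t)
      rw [heq t, map_sub] at this
      exact this
    rw [hcst]
    exact hval _ (by exact_mod_cast hc)
  · obtain ⟨u, v, h, heq⟩ := hfix
    refine ⟨u, v, h, ?_⟩
    have hcst : w u - w v = 1 :=
      Filter.Germ.coe_eq.2 (Filter.Eventually.of_forall heq)
    rw [hcst, map_one]

/-- The standard identification of the plane with the complex numbers. -/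
noncomputable def Plane.toComplex : Plane ≃ₗᵢ[ℝ] ℂ := Complex.orthonormalBasisOneI.repr.symm

/-- A connected graph with at least one edge which is movable has a NAC-coloring. -/
theorem NAC_coloring_of_movable [Fintype V] (G : SimpleGraph V)
    (hconn : G.Connected) (hne : G.edgeSet.Nonempty) (hmov : Movable G) :
    ∃ δ : Sym2 V → Bool, IsNACColoring G δ := by
  obtain ⟨lam, -, p, -, f, ⟨hcont, rfl, hf⟩, hnt, -⟩ := hmov
  obtain ⟨a, b, hab⟩ : ∃ a b, G.Adj a b := by
    obtain ⟨e, he⟩ := hne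
    induction e with
    | h a b => exact ⟨a, b, he⟩
  let P : V → Set.Icc (0 : ℝ) 1 → ℂ := fun v t => Plane.toComplex (f t v)
  have hdist : ∀ u v t, dist (f (t : Set.Icc (0 : ℝ) 1) u) (f t v) = ‖P u t - P v t‖ :=
    fun u v t => by rw [← dist_eq_norm]; exact (Plane.toComplex.dist_map _ _).symm
  let o : Set.Icc (0 : ℝ) 1 := ⟨0, by simp⟩
  have hconst : ∀ ⦃u v⦄, G.Adj u v → ∀ t, ‖P u t - P v t‖ = ‖P u o - P v o‖ := fun u v h t => by
    rw [← hdist, ← hdist]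
    exact ((hf t t.2).2 h).symm
  have hne0 : ∀ ⦃u v⦄, G.Adj u v → ∀ t, P u t - P v t ≠ 0 := fun u v h t => by
    rw [← norm_ne_zero_iff, ← hdist]
    exact dist_ne_zero.2 ((hf t t.2).1 h)
  have hPc : ∀ v, Continuous (P v) := fun v =>
    Plane.toComplex.continuous.comp
      ((continuous_apply v).comp (continuousOn_iff_continuous_domRestrict.1 hcont))
  let g : V → Set.Icc (0 : ℝ) 1 → ℂ := fun v t => P v t / (P a t - P b t)
  have hg : ∀ u v t, g u t - g v t = (P u t - P v t) / (P a t - P b t) :=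
    fun u v t => (sub_div _ _ _).symm
  have hgc : ∀ v, Continuous (g v) := fun v =>
    (hPc v).div ((hPc a).sub (hPc b)) (hne0 hab)
  refine exists_isNACColoring_of_infinite_range_s15 G g (fun u v h => ?_)
    ⟨a, b, hab, fun t => by rw [hg, div_self (hne0 hab t)]⟩ ?_
  · refine ⟨(‖P u o - P v o‖ / ‖P a o - P b o‖) ^ 2, ?_, fun t => ?_⟩
    · exact pow_ne_zero _ (div_ne_zero (norm_ne_zero_iff.2 (hne0 h o))
        (norm_ne_zero_iff.2 (hne0 hab o)))
    · rw [Complex.normSq_eq_norm_sq, hg, norm_div, hconst h, hconst hab]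
  · by_contra! hfin
    have hedge : ∀ ⦃u v⦄, G.Adj u v → ∀ t, g u t - g v t = g u o - g v o := fun u v h t => by
      have hpre := isPreconnected_range ((hgc u).sub (hgc v))
      have hsub : (Set.range (g u - g v)).Subsingleton := by
        by_contra hns
        exact hpre.infinite_of_nontrivial (Set.not_subsingleton_iff.1 hns) (hfin u v h)
      exact hsub ⟨t, rfl⟩ ⟨o, rfl⟩
    have hall : ∀ u v t, g u t - g v t = g u o - g v o := fun u v t => by
      obtain ⟨q⟩ := hconn.preconnected u v
      induction q with
      | nil => simp
      | @cons u v w h q ih =>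
        rw [← sub_add_sub_cancel _ (g v t), hedge h t, ih, sub_add_sub_cancel]
    refine hnt fun t ht u v => ?_
    have hnorm := congrArg norm (hall u v ⟨t, ht⟩)
    rw [hg, hg, norm_div, norm_div, hconst hab,
      div_left_inj' (norm_ne_zero_iff.2 (hne0 hab o)), ← hdist, ← hdist] at hnorm
    exact hnorm
end
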